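/- For every positive integer N, ∫_{U(N)} det(1 − U) · conj( det(1 − ∧³U) ) dU = ⌊N/3⌋ + 1, where dU is the Haar probability measure on the unitary group U(N). In particular, for N = 3g the integral equals g + 1. -/

import Mathlib

open MeasureTheory Matrix

noncomputable section

/-- `det(1 - ∧³U) = ∏_{i₁<i₂<i₃} (1 - x_{i₁} x_{i₂} x_{i₃})`, where `x₁,…,x_N` are the
eigenvalues of `U` (the roots, with multiplicity, of its characteristic polynomial). -/
def detOneSubWedgeThree (N : ℕ) (U : Matrix.unitaryGroup (Fin N) ℂ) : ℂ :=
  ((((Matrix.charpoly (U : Matrix (Fin N) (Fin N) ℂ)).roots).powersetCard 3).map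
    (fun t => 1 - t.prod)).prod

/-! Write `e_k` for the sum of the principal `k`-minors, so that `det(1 - U) = ∑ (-1)^k e_k(U)`, and
let `tr_σ(U) = ∏ p_{|γ|}(U)`, over the cycles `γ` of `σ ∈ S_k`, be the permutation trace.
Left invariance under diagonal and permutation matrices, together with `U U* = 1`, gives
`∫ e_k conj(tr_σ) = sgn σ` for `k ≤ N`, and `∫ e_l conj(tr_σ) = 0` for `l ≠ k`. So for a
symmetric function `f` of the eigenvalues, `∫ det(1 - U) conj(f(U))` is obtained by specializing
the power sums to `p_r ↦ -X^r` in `f` and adding the conjugates of the coefficients up to degree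
`N`.

This specialization sends the `j`-th eigenvalue to `c_j X`, where the `c_j` are the nontrivial
`(N+1)`-th roots of unity, whose power sums are `-1` up to degree `N`. It turns `det(1 - ∧ᵐU)` into
`∏ (1 - T_t X^m)` over the `m`-subsets `t`, with `T_t = ∏_{j ∈ t} c_j`. By Newton's identities
`e_m(c_1^r, …, c_N^r) = (-1)^m`, so for odd `m` the power sums of the `T_t` are again `-1` up to
degree `N / m`, and by Newton's identities once more the coefficient of `X^(mk)` is `1` for
`mk ≤ N`.
-/

namespace UnitaryIntegral

open Equiv Finset Polynomial
open scoped ComplexConjugate Nat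

section Embeddings

lemma exists_forall_ne_of_forall_comp_perm_ne {A α : Type*} [Finite A] {l i : A → α}
    (hl : Function.Injective l) (hi : ∀ τ : Perm A, l ∘ τ ≠ i) : ∃ x, ∀ b, i b ≠ l x := by
  by_contra! h
  choose τ hτ using h
  have hinj : Function.Injective τ := fun a b hab => hl (by rw [← hτ, ← hτ, hab])
  let e := Equiv.ofBijective τ (Finite.injective_iff_bijective.mp hinj)
  refine hi e.symm (funext fun b => ?_)
  rw [Function.comp_apply, ← hτ]
  exact congrArg i (e.apply_symm_apply b)

variable {A n M : Type*} [Fintype A] [Fintype n] [AddCommMonoid M]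

lemma sum_fun_eq_sum_embedding [DecidableEq A] {g : (A → n) → M}
    (hg : ∀ f, ¬ Function.Injective f → g f = 0) : ∑ f, g f = ∑ f : A ↪ n, g f :=
  (Fintype.sum_of_injective _ DFunLike.coe_injective _ _
    (fun f hf => hg f fun hinj => hf ⟨⟨f, hinj⟩, rfl⟩) fun _ => rfl).symm

lemma card_filter_embedding_map_univ_eq [DecidableEq n] {s : Finset n} (hs : #s = Fintype.card A) :
    #{f : A ↪ n | univ.map f = s} = (Fintype.card A)! := by
  classical
  have e : A ≃ s := Fintype.equivOfCardEq (by simp [hs])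
  rw [← Fintype.card_equiv e, ← card_univ]
  refine (card_nbij (fun τ : A ≃ s => τ.toEmbedding.trans (.subtype _)) (fun τ _ => ?_)
    (fun τ _ τ' _ h => ?_) fun f hf => ?_).symm
  · rw [mem_coe, mem_filter, ← Finset.map_map, univ_map_equiv_to_embedding, univ_eq_attach]
    exact ⟨mem_univ _, attach_map_val⟩
  · ext a
    exact congrArg (fun f => f a) h
  · have hmem (a : A) : f a ∈ s := by simp [← (mem_filter.mp hf).2]
    have hbij : Function.Bijective fun a => (⟨f a, hmem a⟩ : s) :=
      (Fintype.bijective_iff_injective_and_card _).mpr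
        ⟨fun a b hab => f.injective (congrArg Subtype.val hab), Fintype.card_congr e⟩
    exact ⟨.ofBijective _ hbij, mem_coe.mpr (mem_univ _), rfl⟩

lemma sum_embedding_map_univ (h : Finset n → M) :
    ∑ f : A ↪ n, h (univ.map f) =
      (Fintype.card A)! • ∑ s ∈ powersetCard (Fintype.card A) univ, h s := by
  classical
  rw [smul_sum, ← sum_fiberwise_of_maps_to (g := fun f : A ↪ n => univ.map f)
    (t := powersetCard (Fintype.card A) univ) fun f _ => by simp [mem_powersetCard]]
  refine sum_congr rfl fun s hs => ?_
  rw [sum_congr rfl fun f hf => congrArg h (mem_filter.mp hf).2, sum_const,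
    card_filter_embedding_map_univ_eq (mem_powersetCard.mp hs).2]

end Embeddings

section EntryMonomials

variable {A B n R : Type*} [Fintype A] [CommRing R]

/-- The monomial `∏ₐ M (r a) (c a)` in the entries of `M`, with rows `r` and columns `c`. -/
def entryMonomial (M : Matrix n n R) (r c : A → n) : R := ∏ a, M (r a) (c a)

lemma entryMonomial_comp_perm (M : Matrix n n R) (r c : A → n) (π : Perm A) :
    entryMonomial M (r ∘ π) (c ∘ π) = entryMonomial M r c :=
  Equiv.prod_comp π fun a => M (r a) (c a)

lemma det_submatrix_eq_sum_entryMonomial [DecidableEq A] (M : Matrix n n R) (r c : A → n) :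
    (M.submatrix r c).det = ∑ σ : Perm A, ((Perm.sign σ : ℤ) : R) * entryMonomial M (r ∘ σ) c :=
  det_apply' _

lemma det_submatrix_eq_zero_of_not_injective [DecidableEq A] (M : Matrix n n R) {r : A → n}
    (hr : ¬ Function.Injective r) (c : A → n) : (M.submatrix r c).det = 0 := by
  obtain ⟨a, b, hab, hne⟩ := Function.not_injective_iff.mp hr
  exact det_zero_of_row_eq hne (by ext; simp [hab])

variable [Fintype n]

lemma sum_entryMonomial_mul_det_submatrix [DecidableEq A] (M N : Matrix n n R) (d c : A → n) :
    ∑ m : A → n, entryMonomial M d m * (N.submatrix m c).det = ((M * N).submatrix d c).det := by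
  have hrow : (M * N).submatrix d c =
      fun a => ∑ x : n, M (d a) x • fun b => N x (c b) := by
    ext a b
    simp [mul_apply]
  rw [hrow]
  change _ = detRowAlternating.toMultilinearMap _
  rw [MultilinearMap.map_sum]
  refine sum_congr rfl fun m _ => ?_
  exact (detRowAlternating.toMultilinearMap.map_smul_univ (fun a => M (d a) (m a)) _).symm

variable [DecidableEq n]

lemma entryMonomial_diagonal_mul (d : n → R) (M : Matrix n n R) (r c : A → n) :
    entryMonomial (diagonal d * M) r c = (∏ a, d (r a)) * entryMonomial M r c := by
  simp only [entryMonomial, diagonal_mul, prod_mul_distrib]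

lemma det_submatrix_diagonal_mul [DecidableEq A] (d : n → R) (M : Matrix n n R) (r c : A → n) :
    ((diagonal d * M).submatrix r c).det = (∏ a, d (r a)) * (M.submatrix r c).det := by
  rw [← det_mul_column]
  congr 1
  ext a b
  simp [diagonal_mul]

lemma submatrix_permMatrix_mul {k l m : Type*} (π : Perm n) (M : Matrix n m R) (r : k → n)
    (c : l → m) :
    (π.permMatrix R * M).submatrix r c = M.submatrix (π ∘ r) c := by
  rw [PEquiv.toMatrix_toPEquiv_mul, submatrix_submatrix, Function.id_comp]

lemma entryMonomial_permMatrix_mul (π : Perm n) (M : Matrix n n R) (r c : A → n) :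
    entryMonomial (π.permMatrix R * M) r c = entryMonomial M (π ∘ r) c := by
  simp [entryMonomial, PEquiv.toMatrix_toPEquiv_mul]

lemma sum_det_submatrix_mul_conj_entryMonomial [DecidableEq A] [StarRing R] {U : Matrix n n R}
    (hU : U ∈ unitaryGroup n R) {c : A → n} (hc : Function.Injective c) (κ : Perm A) :
    ∑ m : A → n, (U.submatrix m c).det * conj (entryMonomial U m (c ∘ κ)) =
      (Perm.sign κ : ℤ) := by
  have hstar (m : A → n) : conj (entryMonomial U m (c ∘ κ)) = entryMonomial (star U) (c ∘ κ) m :=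
    map_prod ..
  have hperm : (1 : Matrix n n R).submatrix (c ∘ κ) c = (1 : Matrix A A R).submatrix κ id := by
    rw [← submatrix_one c hc]
    rfl
  simp only [mul_comm (det _), hstar, sum_entryMonomial_mul_det_submatrix,
    mem_unitaryGroup_iff'.mp hU]
  rw [hperm, det_permute, det_one, mul_one]

end EntryMonomials

section ClassFunctions

variable {A B n R : Type*} [Fintype A] [DecidableEq A] [Fintype B] [DecidableEq B] [Fintype n]
  [CommRing R]

/-- The trace of `M^{⊗ A}` composed with the permutation `σ` of the tensor factors. It is the
product of the power sums `tr (M ^ r)` of the eigenvalues over the cycle lengths `r` of `σ`. -/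
def permTrace (σ : Perm A) (M : Matrix n n R) : R := ∑ i : A → n, entryMonomial M (i ∘ σ) i

lemma permTrace_smul (σ : Perm A) (z : R) (M : Matrix n n R) :
    permTrace σ (z • M) = z ^ Fintype.card A * permTrace σ M := by
  simp [permTrace, entryMonomial, prod_mul_distrib, mul_sum]

lemma permTrace_permCongr (e : A ≃ B) (σ : Perm A) (M : Matrix n n R) :
    permTrace (e.permCongr σ) M = permTrace σ M := by
  refine Fintype.sum_equiv (e.arrowCongr (Equiv.refl n)).symm _ _ fun i => ?_
  refine (Fintype.prod_equiv e _ _ fun a => ?_).symm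
  simp [Equiv.permCongr_apply]

lemma permTrace_sumCongr (σ : Perm A) (τ : Perm B) (M : Matrix n n R) :
    permTrace (Perm.sumCongr σ τ) M = permTrace σ M * permTrace τ M := by
  simp only [permTrace]
  rw [Fintype.sum_mul_sum, ← Fintype.sum_prod_type']
  refine Fintype.sum_equiv (Equiv.sumArrowEquivProdArrow A B n) _ _ fun i => ?_
  simp [entryMonomial, Fintype.prod_sum_type]

variable [DecidableEq n]

/-- The sum of the principal minors of order `k`, that is, the `k`-th elementary symmetric function
of the eigenvalues. -/
def sumPrincipalMinors (k : ℕ) (M : Matrix n n R) : R :=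
  ∑ s ∈ powersetCard k univ, (M.submatrix (Subtype.val : s → n) Subtype.val).det

lemma sumPrincipalMinors_smul (k : ℕ) (z : R) (M : Matrix n n R) :
    sumPrincipalMinors k (z • M) = z ^ k * sumPrincipalMinors k M := by
  rw [sumPrincipalMinors, sumPrincipalMinors, mul_sum]
  refine sum_congr rfl fun s hs => ?_
  rw [submatrix_smul, Pi.smul_apply, Pi.smul_apply, det_smul, Fintype.card_coe,
    (mem_powersetCard.mp hs).2]

lemma factorial_mul_sumPrincipalMinors (M : Matrix n n R) :
    (Fintype.card A)! * sumPrincipalMinors (Fintype.card A) M =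
      ∑ l : A ↪ n, (M.submatrix l l).det := by
  rw [sumPrincipalMinors, ← nsmul_eq_mul, ← sum_embedding_map_univ]
  refine sum_congr rfl fun l _ => ?_
  let e : A ≃ univ.map l := (Equiv.ofInjective l l.injective).trans (Equiv.setCongr (by simp))
  exact (det_submatrix_equiv_self e (M.submatrix (Subtype.val : univ.map l → n) Subtype.val)).symm

lemma factorial_mul_sumPrincipalMinors_eq_sum_permTrace (M : Matrix n n R) :
    (Fintype.card A)! * sumPrincipalMinors (Fintype.card A) M =
      ∑ σ : Perm A, (Perm.sign σ : ℤ) * permTrace σ M := by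
  simp_rw [factorial_mul_sumPrincipalMinors, permTrace, mul_sum]
  rw [sum_comm, ← sum_fun_eq_sum_embedding (g := fun l : A → n => (M.submatrix l l).det)
    fun l hl => det_submatrix_eq_zero_of_not_injective M hl l]
  exact sum_congr rfl fun l _ => det_submatrix_eq_sum_entryMonomial M l l

lemma det_one_sub_eq_sum_sumPrincipalMinors (M : Matrix n n R) :
    (1 - M).det = ∑ k ∈ range (Fintype.card n + 1), (-1) ^ k * sumPrincipalMinors k M := by
  nontriviality R
  rw [← map_one (scalar n), ← eval_charpoly, eval_eq_sum_range, charpoly_natDegree_eq_dim,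
    ← sum_range_reflect]
  refine sum_congr rfl fun k hk => ?_
  have hk' : k ≤ Fintype.card n := Nat.lt_succ_iff.mp (mem_range.mp hk)
  rw [Nat.add_sub_cancel, charpoly_coeff_eq_sum_minors M k hk', one_pow, mul_one,
    sumPrincipalMinors]

end ClassFunctions

section UnitaryMatrices

variable {n R : Type*} [Fintype n] [DecidableEq n] [CommRing R] [StarRing R]

lemma diagonal_mem_unitaryGroup {d : n → R} (hd : ∀ i, d i ∈ unitary R) :
    diagonal d ∈ unitaryGroup n R := by
  rw [mem_unitaryGroup_iff, star_eq_conjTranspose, diagonal_conjTranspose, diagonal_mul_diagonal,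
    ← diagonal_one]
  exact congrArg diagonal (funext fun i => Unitary.mul_star_self_of_mem (hd i))

lemma permMatrix_mem_unitaryGroup (π : Perm n) : π.permMatrix R ∈ unitaryGroup n R := by
  rw [mem_unitaryGroup_iff, star_eq_conjTranspose, conjTranspose_permMatrix, ← permMatrix_mul]
  simp

instance compactSpace_unitaryGroup {𝕜 : Type*} [RCLike 𝕜] : CompactSpace (unitaryGroup n 𝕜) := by
  have hclosed : IsClosed (unitaryGroup n 𝕜 : Set (Matrix n n 𝕜)) := isClosed_unitary
  have hbox : IsCompact
      (Set.univ.pi fun _ : n => Set.univ.pi fun _ : n => Metric.closedBall (0 : 𝕜) 1) :=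
    isCompact_univ_pi fun _ => isCompact_univ_pi fun _ => isCompact_closedBall _ _
  refine isCompact_iff_compactSpace.mp (hbox.of_isClosed_subset hclosed fun U hU => ?_)
  simp only [Set.mem_univ_pi, mem_closedBall_zero_iff]
  exact entry_norm_bound_of_unitary hU

end UnitaryMatrices

section Integration

lemma integral_eq_zero_of_mul_left_eq_smul {G 𝕜 E : Type*} [Group G] [MeasurableSpace G]
    [MeasurableMul G] {μ : Measure G} [μ.IsMulLeftInvariant] [NormedField 𝕜]
    [NormedAddCommGroup E] [NormedSpace ℝ E] [NormedSpace 𝕜 E] [SMulCommClass ℝ 𝕜 E] {f : G → E}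
    {g : G} {w : 𝕜} (hw : w ≠ 1) (hf : ∀ x, f (g * x) = w • f x) : ∫ x, f x ∂μ = 0 := by
  have h := integral_mul_left_eq_self (μ := μ) f g
  simp only [hf, integral_smul] at h
  by_contra hne
  exact hw (smul_left_injective 𝕜 hne (h.trans (one_smul 𝕜 _).symm))

lemma integrable_mul_conj {X 𝕜 : Type*} [TopologicalSpace X] [CompactSpace X] [MeasurableSpace X]
    [OpensMeasurableSpace X] {μ : Measure X} [IsFiniteMeasureOnCompacts μ] [RCLike 𝕜]
    {f g : X → 𝕜} (hf : Continuous f) (hg : Continuous g) :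
    Integrable (fun x => f x * conj (g x)) μ :=
  (hf.mul (RCLike.continuous_conj.comp hg)).integrable_of_hasCompactSupport
    (HasCompactSupport.of_compactSpace _)

@[fun_prop]
lemma continuous_entryMonomial {A n R : Type*} [Fintype A] [CommRing R] [TopologicalSpace R]
    [ContinuousMul R] (r c : A → n) : Continuous fun M : Matrix n n R => entryMonomial M r c :=
  continuous_finsetProd _ fun _ _ => continuous_id.matrix_elem _ _

variable {A B n : Type*} [Fintype A] [Fintype B] [Fintype n]

@[fun_prop]
lemma continuous_permTrace {R : Type*} [DecidableEq A] [CommRing R] [TopologicalSpace R]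
    [IsTopologicalRing R] (σ : Perm A) : Continuous fun M : Matrix n n R => permTrace σ M :=
  continuous_finsetSum _ fun _ _ => continuous_entryMonomial _ _

variable [DecidableEq n]

@[fun_prop]
lemma continuous_sumPrincipalMinors {R : Type*} [CommRing R] [TopologicalSpace R]
    [IsTopologicalRing R] (k : ℕ) : Continuous fun M : Matrix n n R => sumPrincipalMinors k M :=
  continuous_finsetSum _ fun _ _ => (continuous_id.matrix_submatrix _ _).matrix_det

variable [MeasurableSpace (unitaryGroup n ℂ)] [BorelSpace (unitaryGroup n ℂ)]
  {μ : Measure (unitaryGroup n ℂ)} [μ.IsMulLeftInvariant]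

lemma integral_det_submatrix_mul_conj_entryMonomial_eq_zero [DecidableEq A] {r : A → n}
    (hr : Function.Injective r) (c : A → n) {r' : B → n} (c' : B → n) {x : A}
    (hx : ∀ b, r' b ≠ r x) :
    ∫ U, (U.1.submatrix r c).det * conj (entryMonomial U.1 r' c') ∂μ = 0 := by
  let d : n → ℂ := fun i => if i = r x then -1 else 1
  have hd : diagonal d ∈ unitaryGroup n ℂ := diagonal_mem_unitaryGroup fun i => by
    simp only [d]
    split_ifs <;> simp [Unitary.mem_iff]
  have hdr : ∏ a, d (r a) = -1 := by simp [d, hr.eq_iff]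
  have hdr' : ∏ b, d (r' b) = 1 := by simp [d, hx]
  refine integral_eq_zero_of_mul_left_eq_neg (g := ⟨diagonal d, hd⟩) fun U => ?_
  simp [det_submatrix_diagonal_mul, entryMonomial_diagonal_mul, hdr, hdr']

lemma integral_det_submatrix_mul_conj_entryMonomial_comp [DecidableEq A] (r c : A → n)
    (r' c' : B → n) (π : Perm n) :
    ∫ U, (U.1.submatrix r c).det * conj (entryMonomial U.1 r' c') ∂μ =
      ∫ U, (U.1.submatrix (π ∘ r) c).det * conj (entryMonomial U.1 (π ∘ r') c') ∂μ := by
  rw [← integral_mul_left_eq_self _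
    (⟨π.permMatrix ℂ, permMatrix_mem_unitaryGroup π⟩ : unitaryGroup n ℂ)]
  simp only [Submonoid.coe_mul, entryMonomial_permMatrix_mul, submatrix_permMatrix_mul]

lemma integral_sumPrincipalMinors_mul_conj_permTrace_of_ne [DecidableEq A] {k : ℕ}
    (hk : k ≠ Fintype.card A) (σ : Perm A) :
    ∫ U, sumPrincipalMinors k U.1 * conj (permTrace σ U.1) ∂μ = 0 := by
  have hz := Complex.isPrimitiveRoot_exp (k + Fintype.card A + 1) (by lia)
  set z := Complex.exp (2 * Real.pi * Complex.I / (k + Fintype.card A + 1 : ℕ))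
  have hunit : z * conj z = 1 := by
    rw [Complex.mul_conj, Complex.normSq_eq_norm_sq, hz.norm'_eq_one (by lia)]
    simp
  let g : unitaryGroup n ℂ := (⟨z, Unitary.mem_iff_self_mul_star.mpr hunit⟩ : unitary ℂ) • 1
  have hw : z ^ k * conj (z ^ Fintype.card A) ≠ 1 := fun h => by
    refine hk (hz.pow_inj (by lia) (by lia) ?_)
    calc z ^ k = z ^ k * (z * conj z) ^ Fintype.card A := by rw [hunit, one_pow, mul_one]
      _ = (z ^ k * conj (z ^ Fintype.card A)) * z ^ Fintype.card A := by rw [map_pow]; ring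
      _ = z ^ Fintype.card A := by rw [h, one_mul]
  refine integral_eq_zero_of_mul_left_eq_smul (g := g) hw fun U => ?_
  have hg : (g * U).1 = z • U.1 := by simp [g]
  rw [hg, sumPrincipalMinors_smul, permTrace_smul, map_mul, smul_eq_mul]
  ring

variable [IsProbabilityMeasure μ]

lemma card_mul_integral_det_submatrix_mul_conj_entryMonomial [DecidableEq A] (r : A ↪ n)
    {c : A → n} (hc : Function.Injective c) (κ : Perm A) :
    Fintype.card (A ↪ n) * ∫ U, (U.1.submatrix r c).det * conj (entryMonomial U.1 r (c ∘ κ)) ∂μ =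
      (Perm.sign κ : ℤ) := by
  have hconst (m : A ↪ n) :
      ∫ U, (U.1.submatrix m c).det * conj (entryMonomial U.1 m (c ∘ κ)) ∂μ =
        ∫ U, (U.1.submatrix r c).det * conj (entryMonomial U.1 r (c ∘ κ)) ∂μ := by
    obtain ⟨π, hπ⟩ := Perm.exists_extending_pair r m r.injective m.injective
    rw [integral_det_submatrix_mul_conj_entryMonomial_comp r c r (c ∘ κ) π,
      show π ∘ r = m from funext hπ]
  have hint (m : A → n) : Integrable
      (fun U => (U.1.submatrix m c).det * conj (entryMonomial U.1 m (c ∘ κ))) μ :=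
    integrable_mul_conj (by fun_prop) (by fun_prop)
  have hzero (m : A → n) (hm : ¬ Function.Injective m) :
      ∫ U, (U.1.submatrix m c).det * conj (entryMonomial U.1 m (c ∘ κ)) ∂μ = 0 := by
    simp [det_submatrix_eq_zero_of_not_injective _ hm]
  calc _ = ∑ m : A ↪ n, ∫ U, (U.1.submatrix m c).det * conj (entryMonomial U.1 m (c ∘ κ)) ∂μ := by
        simp only [hconst, sum_const, card_univ, nsmul_eq_mul]
    _ = ∑ m : A → n, ∫ U, (U.1.submatrix m c).det * conj (entryMonomial U.1 m (c ∘ κ)) ∂μ :=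
        (sum_fun_eq_sum_embedding hzero).symm
    _ = ∫ _ : unitaryGroup n ℂ, ((Perm.sign κ : ℤ) : ℂ) ∂μ := by
        rw [← integral_finsetSum _ fun m _ => hint m]
        simp only [sum_det_submatrix_mul_conj_entryMonomial (Subtype.prop _) hc]
    _ = (Perm.sign κ : ℤ) := by simp

lemma card_mul_integral_det_submatrix_mul_conj_permTrace [DecidableEq A] (l : A ↪ n)
    (σ : Perm A) :
    Fintype.card (A ↪ n) * ∫ U, (U.1.submatrix l l).det * conj (permTrace σ U.1) ∂μ =
      (Fintype.card A)! * (Perm.sign σ : ℤ) := by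
  let I (i : A → n) : ℂ := ∫ U, (U.1.submatrix l l).det * conj (entryMonomial U.1 (i ∘ σ) i) ∂μ
  have hint (i : A → n) : Integrable
      (fun U => (U.1.submatrix l l).det * conj (entryMonomial U.1 (i ∘ σ) i)) μ :=
    integrable_mul_conj (by fun_prop) (by fun_prop)
  have hzero (i : A → n) (hi : i ∉ Set.range fun τ : Perm A => l ∘ τ) : I i = 0 := by
    obtain ⟨x, hx⟩ := exists_forall_ne_of_forall_comp_perm_ne l.injective
      fun τ hτ => hi ⟨τ, hτ⟩
    exact integral_det_submatrix_mul_conj_entryMonomial_eq_zero l.injective l _ fun b => hx (σ b)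
  have hperm (τ : Perm A) : Fintype.card (A ↪ n) * I (l ∘ τ) = (Perm.sign σ : ℤ) := by
    have hmono (U : Matrix n n ℂ) : entryMonomial U ((l ∘ τ) ∘ σ) (l ∘ τ) =
        entryMonomial U l (l ∘ (τ * (τ * σ)⁻¹ : Perm A)) := by
      rw [← entryMonomial_comp_perm U l _ (τ * σ)]
      simp [Function.comp_def]
    have hsign : Perm.sign (τ * (τ * σ)⁻¹) = Perm.sign σ := by
      rw [Perm.sign_mul, Perm.sign_inv, Perm.sign_mul, ← mul_assoc, Int.units_mul_self, one_mul]
    simp only [I, hmono, card_mul_integral_det_submatrix_mul_conj_entryMonomial l l.injective,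
      hsign]
  have hinj : Function.Injective fun τ : Perm A => l ∘ τ :=
    fun τ τ' h => DFunLike.coe_injective (l.injective.comp_left h)
  calc _ = Fintype.card (A ↪ n) * ∑ i, I i := by
        simp only [permTrace, map_sum, mul_sum]
        rw [integral_finsetSum _ fun i _ => hint i, mul_sum]
    _ = Fintype.card (A ↪ n) * ∑ τ : Perm A, I (l ∘ τ) := by
        rw [Fintype.sum_of_injective _ hinj _ I hzero fun _ => rfl]
    _ = (Fintype.card A)! * (Perm.sign σ : ℤ) := by
        simp only [mul_sum, hperm, sum_const, card_univ, Fintype.card_perm, nsmul_eq_mul]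

lemma integral_sumPrincipalMinors_mul_conj_permTrace [DecidableEq A]
    (hA : Fintype.card A ≤ Fintype.card n) (σ : Perm A) :
    ∫ U, sumPrincipalMinors (Fintype.card A) U.1 * conj (permTrace σ U.1) ∂μ =
      (Perm.sign σ : ℤ) := by
  have hcard : (Fintype.card (A ↪ n) : ℂ) ≠ 0 := by
    rw [Nat.cast_ne_zero, Fintype.card_embedding_eq]
    exact (Nat.descFactorial_pos.mpr hA).ne'
  have hfac : ((Fintype.card A)! : ℂ) ≠ 0 := by exact_mod_cast Nat.factorial_ne_zero _
  have hint (l : A ↪ n) :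
      Integrable (fun U => (U.1.submatrix l l).det * conj (permTrace σ U.1)) μ :=
    integrable_mul_conj (by fun_prop) (by fun_prop)
  refine mul_left_cancel₀ (mul_ne_zero hcard hfac) ?_
  rw [mul_assoc, mul_assoc, ← integral_const_mul]
  simp only [← mul_assoc ((Fintype.card A)! : ℂ) (sumPrincipalMinors _ _),
    factorial_mul_sumPrincipalMinors, sum_mul]
  rw [integral_finsetSum _ fun l _ => hint l]
  simp only [mul_sum, card_mul_integral_det_submatrix_mul_conj_permTrace, sum_const, card_univ,
    nsmul_eq_mul]

lemma integral_det_one_sub_mul_conj_permTrace [DecidableEq A] (σ : Perm A) :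
    ∫ U : unitaryGroup n ℂ, (1 - U.1).det * conj (permTrace σ U.1) ∂μ =
      if Fintype.card A ≤ Fintype.card n then
        (-1) ^ Fintype.card A * ((Perm.sign σ : ℤ) : ℂ) else 0 := by
  have hint (k : ℕ) : Integrable
      (fun U => (-1) ^ k * (sumPrincipalMinors k U.1 * conj (permTrace σ U.1))) μ :=
    (integrable_mul_conj (by fun_prop) (by fun_prop)).const_mul _
  have hne (k : ℕ) (hk : k ≠ Fintype.card A) :
      (-1) ^ k * ∫ U, sumPrincipalMinors k U.1 * conj (permTrace σ U.1) ∂μ = 0 := by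
    rw [integral_sumPrincipalMinors_mul_conj_permTrace_of_ne hk σ, mul_zero]
  simp_rw [det_one_sub_eq_sum_sumPrincipalMinors, sum_mul, mul_assoc]
  rw [integral_finsetSum _ fun k _ => hint k]
  simp_rw [integral_const_mul]
  split_ifs with hA
  · rw [sum_eq_single_of_mem _ (mem_range.mpr (Nat.lt_succ_of_le hA)) fun k _ => hne k,
      integral_sumPrincipalMinors_mul_conj_permTrace hA]
  · exact sum_eq_zero fun k hk => hne k (by rw [mem_range] at hk; lia)

end Integration

section SignSpecialization

variable {n R : Type*} [Fintype n] [DecidableEq n]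

/-- The permutation traces, each paired with its image under the specialization `p_r ↦ -X ^ r` of
the power sums. A cycle of length `r` contributes `-X ^ r = (-1) ^ (r - 1) * (-X) ^ r`, hence the
sign of the permutation. -/
def permTracePairs (n R : Type*) [Fintype n] [CommRing R] :
    Submonoid ((Matrix n n R → R) × R[X]) where
  carrier := {p | ∃ (k : ℕ) (σ : Perm (Fin k)),
    p = (permTrace σ, ((Perm.sign σ : ℤ) : R[X]) * (-X) ^ k)}
  one_mem' := ⟨0, 1, by ext <;> simp [permTrace, entryMonomial]⟩
  mul_mem' := by
    rintro _ _ ⟨k, σ, rfl⟩ ⟨m, τ, rfl⟩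
    refine ⟨k + m, finSumFinEquiv.permCongr (Perm.sumCongr σ τ), Prod.ext ?_ ?_⟩
    · ext M
      simp [permTrace_permCongr, permTrace_sumCongr]
    · simp only [Prod.mk_mul_mk, Perm.sign_permCongr, Perm.sign_sumCongr, Units.val_mul,
        Int.cast_mul]
      ring

/-- The graph of the specialization `p_r ↦ -X ^ r`, as a relation between polynomial class
functions of matrices and polynomials in `X`. It need not be single-valued, since the power sums of
the eigenvalues are algebraically dependent. -/
def signSpecialization (n R : Type*) [Fintype n] [CommRing R] :
    Subalgebra R ((Matrix n n R → R) × R[X]) :=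
  Algebra.adjoin R (permTracePairs n R)

lemma sumPrincipalMinors_mem_signSpecialization [Field R] [CharZero R] (k : ℕ) :
    ((sumPrincipalMinors k, (-X) ^ k) : (Matrix n n R → R) × R[X]) ∈ signSpecialization n R := by
  have hfac : (k ! : R) ≠ 0 := by exact_mod_cast k.factorial_ne_zero
  have hminors : (k ! : R) • (sumPrincipalMinors k : Matrix n n R → R) =
      ∑ σ : Perm (Fin k), ((Perm.sign σ : ℤ) : R) • permTrace σ := by
    ext M
    simpa using factorial_mul_sumPrincipalMinors_eq_sum_permTrace (A := Fin k) M
  have hpow : (k ! : R) • (-X : R[X]) ^ k = ∑ σ : Perm (Fin k), ((Perm.sign σ : ℤ) : R) •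
      (((Perm.sign σ : ℤ) : R[X]) * (-X) ^ k) := by
    have hsq (σ : Perm (Fin k)) : ((Perm.sign σ : ℤ) : R) • ((Perm.sign σ : ℤ) : R[X]) = 1 := by
      rw [Int.cast_smul_eq_zsmul, zsmul_eq_mul, ← Int.cast_mul, ← Units.val_mul, Int.units_mul_self]
      simp
    simp only [← smul_mul_assoc, hsq, one_mul, sum_const, card_univ, Fintype.card_perm,
      Fintype.card_fin, Nat.cast_smul_eq_nsmul]
  have hpair : ((sumPrincipalMinors k, (-X) ^ k) : (Matrix n n R → R) × R[X]) =
      (k ! : R)⁻¹ • ∑ σ : Perm (Fin k), ((Perm.sign σ : ℤ) : R) •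
        (permTrace σ, ((Perm.sign σ : ℤ) : R[X]) * (-X) ^ k) := by
    rw [eq_inv_smul_iff₀ hfac]
    refine Prod.ext ?_ ?_
    · simpa only [Prod.smul_fst, Prod.fst_sum] using hminors
    · simpa only [Prod.smul_snd, Prod.snd_sum] using hpow
  rw [hpair]
  refine Subalgebra.smul_mem _ (Subalgebra.sum_mem _ fun σ _ => Subalgebra.smul_mem _ ?_ _) _
  exact Algebra.subset_adjoin (show _ ∈ permTracePairs n R from ⟨k, σ, rfl⟩)

lemma integral_det_one_sub_mul_conj_of_mem_signSpecialization
    [MeasurableSpace (unitaryGroup n ℂ)] [BorelSpace (unitaryGroup n ℂ)]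
    {μ : Measure (unitaryGroup n ℂ)} [μ.IsMulLeftInvariant] [IsProbabilityMeasure μ]
    {p : (Matrix n n ℂ → ℂ) × ℂ[X]} (hp : p ∈ signSpecialization n ℂ) :
    ∫ U : unitaryGroup n ℂ, (1 - U.1).det * conj (p.1 U.1) ∂μ =
      ∑ k ∈ range (Fintype.card n + 1), conj (p.2.coeff k) := by
  have hspan : p ∈ Submodule.span ℂ (permTracePairs n ℂ : Set ((Matrix n n ℂ → ℂ) × ℂ[X])) := by
    rwa [signSpecialization, ← Subalgebra.mem_toSubmodule, Algebra.adjoin_eq_span,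
      Submonoid.closure_eq] at hp
  have hint {f : Matrix n n ℂ → ℂ} (hf : Continuous f) :
      Integrable (fun U : unitaryGroup n ℂ => (1 - U.1).det * conj (f U.1)) μ :=
    integrable_mul_conj (by fun_prop) (by fun_prop)
  clear hp
  suffices Continuous p.1 ∧ _ from this.2
  induction hspan using Submodule.span_induction with
  | mem p hp =>
    obtain ⟨m, σ, rfl⟩ := hp
    refine ⟨continuous_permTrace σ, ?_⟩
    rw [integral_det_one_sub_mul_conj_permTrace σ, Fintype.card_fin]
    have hmonomial : ((Perm.sign σ : ℤ) : ℂ[X]) * (-X) ^ m =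
        C ((-1) ^ m * ((Perm.sign σ : ℤ) : ℂ)) * X ^ m := by
      rw [neg_pow, map_mul, map_pow, map_neg, map_one, map_intCast]
      ring
    simp only [hmonomial, coeff_C_mul, coeff_X_pow]
    simp [apply_ite conj]
  | zero => exact ⟨continuous_const, by simp⟩
  | add p q _ _ hp hq =>
    refine ⟨hp.1.add hq.1, ?_⟩
    simp only [Prod.fst_add, Prod.snd_add, Pi.add_apply, coeff_add, map_add, mul_add,
      sum_add_distrib]
    rw [integral_add (hint hp.1) (hint hq.1), hp.2, hq.2]
  | smul c p _ hp =>
    refine ⟨hp.1.const_smul c, ?_⟩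
    simp only [Prod.smul_fst, Prod.smul_snd, Pi.smul_apply, coeff_smul, smul_eq_mul, map_mul,
      mul_left_comm _ (conj c)]
    rw [integral_const_mul, hp.2, mul_sum]

end SignSpecialization

section PowerSums

variable {ι : Type*} [Fintype ι]

lemma coeff_prod_one_sub_C_mul_X {R : Type*} [CommRing R] (c : ι → R) (k : ℕ) :
    (∏ i, (1 - C (c i) * X)).coeff k =
      (-1) ^ k * MvPolynomial.aeval c (MvPolynomial.esymm ι R k) := by
  classical
  simp only [sub_eq_add_neg, prod_one_add, prod_neg, prod_mul_distrib, prod_const, ← map_prod,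
    finsetSum_coeff, MvPolynomial.esymm, map_sum, powersetCard_eq_filter,
    sum_filter, mul_sum]
  refine sum_congr rfl fun t _ => ?_
  rw [← C_1, ← C_neg, ← C_pow, coeff_C_mul, coeff_C_mul_X_pow]
  split_ifs <;> simp_all

variable {K : Type*} [Field K]

lemma aeval_esymm_of_sum_pow_eq_neg_one [CharZero K] {c : ι → K} {m : ℕ}
    (hc : ∀ r, 0 < r → r ≤ m → ∑ i, c i ^ r = -1) {k : ℕ} (hk : k ≤ m) :
    MvPolynomial.aeval c (MvPolynomial.esymm ι K k) = (-1) ^ k := by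
  induction k using Nat.strong_induction_on with
  | _ k ih =>
    rcases Nat.eq_zero_or_pos k with rfl | hpos
    · simp
    have hnewton := congrArg (MvPolynomial.aeval c) (MvPolynomial.mul_esymm_eq_sum ι K k)
    simp only [map_mul, map_natCast, map_pow, map_neg, map_one, map_sum] at hnewton
    have hterm : ∀ a ∈ {a ∈ antidiagonal k | a.1 < k},
        (-1 : K) ^ a.1 * MvPolynomial.aeval c (MvPolynomial.esymm ι K a.1) *
          MvPolynomial.aeval c (MvPolynomial.psum ι K a.2) = -1 := by
      intro a ha
      simp only [mem_filter, HasAntidiagonal.mem_antidiagonal] at ha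
      rw [ih a.1 ha.2 (by lia), MvPolynomial.psum, map_sum, ← mul_pow]
      simp only [map_pow, MvPolynomial.aeval_X]
      rw [hc a.2 (by lia) (by lia)]
      simp
    have hcard : #{a ∈ antidiagonal k | a.1 < k} = k := by
      have herase : {a ∈ antidiagonal k | a.1 < k} = (antidiagonal k).erase (k, 0) := by
        ext ⟨i, j⟩
        simp only [mem_filter, HasAntidiagonal.mem_antidiagonal, mem_erase, ne_eq, Prod.mk.injEq]
        lia
      rw [herase, card_erase_of_mem (by simp), Nat.card_antidiagonal, Nat.add_sub_cancel]
    rw [sum_congr rfl hterm, sum_const, hcard, nsmul_eq_mul] at hnewton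
    refine mul_left_cancel₀ (Nat.cast_ne_zero.mpr hpos.ne' : (k : K) ≠ 0) ?_
    rw [hnewton, pow_succ]
    ring

lemma exists_sum_pow_eq_neg_one (ι K : Type*) [Fintype ι] [Field K] [IsAlgClosed K] [CharZero K] :
    ∃ c : ι → K, ∀ r, 0 < r → r ≤ Fintype.card ι → ∑ i, c i ^ r = -1 := by
  obtain ⟨ζ, hζ⟩ := HasEnoughRootsOfUnity.exists_primitiveRoot K (Fintype.card ι + 1)
  refine ⟨fun i => ζ ^ ((Fintype.equivFin ι i : ℕ) + 1), fun r hr hrN => ?_⟩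
  have hne : ζ ^ r ≠ 1 := hζ.pow_ne_one_of_pos_of_lt hr.ne' (by lia)
  have hgeom : ∑ j ∈ range (Fintype.card ι + 1), (ζ ^ r) ^ j = 0 := by
    rw [geom_sum_eq hne, ← pow_mul, mul_comm r, pow_mul, hζ.pow_eq_one, one_pow, sub_self,
      zero_div]
  rw [sum_range_succ', pow_zero, ← Fin.sum_univ_eq_sum_range (fun j => (ζ ^ r) ^ (j + 1)),
    ← (Fintype.equivFin ι).sum_comp] at hgeom
  simp_rw [← pow_mul, mul_comm _ r, pow_mul]
  exact eq_neg_of_add_eq_zero_left hgeom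

end PowerSums

section Eigenvalues

variable {n K : Type*} [Fintype n] [DecidableEq n] [Field K] [IsAlgClosed K]

lemma exists_map_univ_eq {ι α : Type*} [Fintype ι] {s : Multiset α}
    (hs : s.card = Fintype.card ι) : ∃ x : ι → α, univ.val.map x = s := by
  classical
  obtain ⟨e⟩ : Nonempty (ι ≃ s) := Fintype.card_eq.mp (by rw [Multiset.card_coe, hs])
  refine ⟨(fun y : s => (y : α)) ∘ e, ?_⟩
  rw [← Multiset.map_map, Multiset.map_univ_val_equiv, Multiset.map_univ_coe]

lemma card_roots_charpoly (M : Matrix n n K) : M.charpoly.roots.card = Fintype.card n := by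
  rw [splits_iff_card_roots.mp (IsAlgClosed.splits _), charpoly_natDegree_eq_dim]

/-- The eigenvalues of a matrix with their algebraic multiplicities, enumerated by the index type
of the matrix in an arbitrary order. -/
def eigenvalues (M : Matrix n n K) : n → K :=
  (exists_map_univ_eq (card_roots_charpoly M)).choose

lemma map_eigenvalues (M : Matrix n n K) :
    (univ : Finset n).val.map (eigenvalues M) = M.charpoly.roots :=
  (exists_map_univ_eq (card_roots_charpoly M)).choose_spec

lemma aeval_eigenvalues_esymm (M : Matrix n n K) {k : ℕ} (hk : k ≤ Fintype.card n) :
    MvPolynomial.aeval (eigenvalues M) (MvPolynomial.esymm n K k) = sumPrincipalMinors k M := by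
  have hdeg := charpoly_natDegree_eq_dim M
  have hvieta := coeff_eq_esymm_roots_of_card (p := M.charpoly)
    ((card_roots_charpoly M).trans hdeg.symm) (k := Fintype.card n - k) (by lia)
  rw [charpoly_coeff_eq_sum_minors M k hk, (charpoly_monic M).leadingCoeff, one_mul, hdeg,
    Nat.sub_sub_self hk] at hvieta
  rw [MvPolynomial.aeval_esymm_eq_multiset_esymm, map_eigenvalues, sumPrincipalMinors]
  exact (mul_left_cancel₀ (pow_ne_zero k (neg_ne_zero.mpr one_ne_zero)) hvieta).symm

lemma aeval_C_mul_X_esymm {ι R : Type*} [Fintype ι] [CommSemiring R] (c : ι → R) (k : ℕ) :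
    MvPolynomial.aeval (fun j => (C (c j) * X : R[X])) (MvPolynomial.esymm ι R k) =
      C (MvPolynomial.aeval c (MvPolynomial.esymm ι R k)) * X ^ k := by
  simp only [MvPolynomial.esymm, map_sum, map_prod, MvPolynomial.aeval_X, sum_mul]
  refine sum_congr rfl fun t ht => ?_
  rw [prod_mul_distrib, prod_const, (mem_powersetCard.mp ht).2]

lemma mem_signSpecialization_of_isSymmetric [CharZero K] {c : n → K}
    (hc : ∀ r, 0 < r → r ≤ Fintype.card n → ∑ j, c j ^ r = -1)
    {p : MvPolynomial n K} (hp : p.IsSymmetric) :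
    ((fun M => MvPolynomial.aeval (eigenvalues M) p,
      MvPolynomial.aeval (fun j => C (c j) * X) p) : (Matrix n n K → K) × K[X]) ∈
      signSpecialization n K := by
  let x (j : n) : (Matrix n n K → K) × K[X] := (fun M => eigenvalues M j, C (c j) * X)
  have haeval (q : MvPolynomial n K) : MvPolynomial.aeval x q =
      (fun M => MvPolynomial.aeval (eigenvalues M) q,
        MvPolynomial.aeval (fun j => C (c j) * X) q) := by
    refine Prod.ext (funext fun M => ?_) ?_
    · exact MvPolynomial.comp_aeval_apply x
        ((Pi.evalAlgHom K (fun _ : Matrix n n K => K) M).comp (AlgHom.fst K _ K[X])) q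
    · exact MvPolynomial.comp_aeval_apply x (AlgHom.snd K (Matrix n n K → K) K[X]) q
  have hesymm (i : Fin (Fintype.card n)) :
      MvPolynomial.aeval x (MvPolynomial.esymm n K (i + 1)) ∈ signSpecialization n K := by
    simpa only [haeval, aeval_C_mul_X_esymm, aeval_esymm_of_sum_pow_eq_neg_one hc i.2,
      aeval_eigenvalues_esymm _ (Nat.succ_le_of_lt i.2), map_pow, map_neg, map_one, ← neg_pow]
      using sumPrincipalMinors_mem_signSpecialization (n := n) (R := K) (i + 1)
  obtain ⟨q, hq⟩ := MvPolynomial.esymmAlgHom_surjective K le_rfl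
    ⟨p, (MvPolynomial.mem_symmetricSubalgebra p).mpr hp⟩
  have hpq := congrArg Subtype.val hq
  rw [MvPolynomial.esymmAlgHom_apply] at hpq
  rw [← haeval, ← show _ = p from hpq, MvPolynomial.comp_aeval_apply]
  have hrange : (MvPolynomial.aeval fun i : Fin (Fintype.card n) =>
      MvPolynomial.aeval x (MvPolynomial.esymm n K (i + 1))).range ≤ signSpecialization n K := by
    rw [← Algebra.adjoin_range_eq_range_aeval, Algebra.adjoin_le_iff]
    rintro _ ⟨i, rfl⟩
    exact hesymm i
  exact hrange ⟨q, rfl⟩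

end Eigenvalues

section Wedge

/-- The polynomial `∏_{#t = m} (1 - ∏_{i ∈ t} X_i)`, whose value at the eigenvalues of a matrix is
the determinant of `1 - ∧ᵐ` of that matrix. -/
def wedgePolynomial (ι R : Type*) [Fintype ι] [CommRing R] (m : ℕ) : MvPolynomial ι R :=
  ∏ t ∈ powersetCard m univ, (1 - ∏ i ∈ t, MvPolynomial.X i)

/-- `det(1 - ∧ᵐ M)`, as the product over the `m`-element submultisets of the eigenvalues of `M`
as in `detOneSubWedgeThree`. -/
def detOneSubWedge {n K : Type*} [Fintype n] [DecidableEq n] [Field K] (m : ℕ)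
    (M : Matrix n n K) : K :=
  ((M.charpoly.roots.powersetCard m).map fun t => 1 - t.prod).prod

lemma wedgePolynomial_isSymmetric (ι R : Type*) [Fintype ι] [CommRing R] (m : ℕ) :
    (wedgePolynomial ι R m).IsSymmetric := by
  intro e
  simp only [wedgePolynomial, map_prod, map_sub, map_one, MvPolynomial.rename_X]
  exact prod_equiv e.finsetCongr (by simp [mem_powersetCard])
    fun t _ => by simp [Equiv.finsetCongr_apply, prod_map]

lemma aeval_eigenvalues_wedgePolynomial {n K : Type*} [Fintype n] [DecidableEq n] [Field K]
    [IsAlgClosed K] (m : ℕ) (M : Matrix n n K) :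
    MvPolynomial.aeval (eigenvalues M) (wedgePolynomial n K m) = detOneSubWedge m M := by
  rw [detOneSubWedge, ← map_eigenvalues, Multiset.powersetCard_map, Multiset.map_map,
    wedgePolynomial, map_prod, Finset.prod, ← map_val_val_powersetCard, Multiset.map_map]
  congr 1
  refine Multiset.map_congr rfl fun t _ => ?_
  simp only [Function.comp_apply, map_sub, map_one, map_prod, MvPolynomial.aeval_X]
  rfl

variable {ι : Type*} [Fintype ι] {m : ℕ}

lemma aeval_C_mul_X_wedgePolynomial {R : Type*} [CommRing R] (c : ι → R) (m : ℕ) :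
    MvPolynomial.aeval (fun j => (C (c j) * X : R[X])) (wedgePolynomial ι R m) =
      expand R m (∏ t : powersetCard m (univ : Finset ι), (1 - C (∏ j ∈ t.1, c j) * X)) := by
  rw [wedgePolynomial, map_prod, ← prod_attach, map_prod, univ_eq_attach]
  refine prod_congr rfl fun t _ => ?_
  simp only [map_sub, map_one, map_prod, MvPolynomial.aeval_X, map_mul, expand_C, expand_X,
    prod_mul_distrib, prod_const, (mem_powersetCard.mp t.2).2]

variable {K : Type*} [Field K] [CharZero K] {c : ι → K}

lemma sum_prod_pow_eq_neg_one (hm : Odd m)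
    (hc : ∀ r, 0 < r → r ≤ Fintype.card ι → ∑ j, c j ^ r = -1) {r : ℕ} (hr : 0 < r)
    (hrm : r ≤ Fintype.card ι / m) :
    ∑ t : powersetCard m (univ : Finset ι), (∏ j ∈ t.1, c j) ^ r = -1 := by
  have hesymm := aeval_esymm_of_sum_pow_eq_neg_one (c := fun j => c j ^ r) (m := m)
    (fun s hs hsm => by
      simp_rw [← pow_mul]
      exact hc _ (Nat.mul_pos hr hs)
        ((Nat.mul_le_mul hrm hsm).trans (Nat.div_mul_le_self _ _))) le_rfl
  rw [hm.neg_one_pow, MvPolynomial.esymm, map_sum, ← sum_attach] at hesymm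
  simpa only [map_prod, MvPolynomial.aeval_X, prod_pow, univ_eq_attach] using hesymm

lemma coeff_aeval_C_mul_X_wedgePolynomial (hm : Odd m)
    (hc : ∀ r, 0 < r → r ≤ Fintype.card ι → ∑ j, c j ^ r = -1) {k : ℕ}
    (hk : k ≤ Fintype.card ι) :
    (MvPolynomial.aeval (fun j => C (c j) * X) (wedgePolynomial ι K m)).coeff k =
      if m ∣ k then 1 else 0 := by
  rw [aeval_C_mul_X_wedgePolynomial, coeff_expand hm.pos, coeff_prod_one_sub_C_mul_X,
    aeval_esymm_of_sum_pow_eq_neg_one (fun r => sum_prod_pow_eq_neg_one hm hc)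
      (Nat.div_le_div_right hk), ← mul_pow]
  simp

lemma sum_range_ite_dvd (R : Type*) [Semiring R] (N m : ℕ) :
    ∑ k ∈ range (N + 1), (if m ∣ k then 1 else 0 : R) = ((N / m : ℕ) : R) + 1 := by
  rw [sum_range_succ', sum_boole, Nat.card_multiples, if_pos (dvd_zero m)]

end Wedge

end UnitaryIntegral

open UnitaryIntegral Finset ComplexConjugate in
theorem integral_det_one_sub_mul_conj_det_wedge_three_general {n : Type*} [Fintype n]
    [DecidableEq n] [MeasurableSpace (unitaryGroup n ℂ)] [BorelSpace (unitaryGroup n ℂ)]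
    (μ : Measure (unitaryGroup n ℂ)) [μ.IsMulLeftInvariant] [IsProbabilityMeasure μ] {m : ℕ}
    (hm : Odd m) :
    ∫ U : unitaryGroup n ℂ, (1 - U.1).det * conj (detOneSubWedge m U.1) ∂μ =
      ((Fintype.card n / m : ℕ) : ℂ) + 1 := by
  obtain ⟨c, hc⟩ := exists_sum_pow_eq_neg_one n ℂ
  have hmem := mem_signSpecialization_of_isSymmetric hc (wedgePolynomial_isSymmetric n ℂ m)
  have hintegral := integral_det_one_sub_mul_conj_of_mem_signSpecialization (μ := μ) hmem
  simp only [aeval_eigenvalues_wedgePolynomial] at hintegral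
  rw [hintegral, ← sum_range_ite_dvd]
  refine sum_congr rfl fun k hk => ?_
  rw [coeff_aeval_C_mul_X_wedgePolynomial hm hc (Nat.lt_succ_iff.mp (mem_range.mp hk)),
    apply_ite conj, map_one, map_zero]

/-- **Theorem 1.5 (matrix integral).** For the Haar probability measure on `U(N)`
(a left-invariant Borel probability measure),
`∫_{U(N)} det(1-U) · conj(det(1-∧³U)) dU = ⌊N/3⌋ + 1`; in particular for `N = 3g`
the integral is `g + 1`. -/
theorem integral_det_one_sub_mul_conj_det_wedge_three
    (N : ℕ) (hN : 0 < N)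
    [MeasurableSpace (Matrix.unitaryGroup (Fin N) ℂ)]
    [BorelSpace (Matrix.unitaryGroup (Fin N) ℂ)]
    (μ : Measure (Matrix.unitaryGroup (Fin N) ℂ))
    [IsProbabilityMeasure μ]
    (hinv : ∀ V : Matrix.unitaryGroup (Fin N) ℂ,
      MeasurePreserving (fun U => V * U) μ μ) :
    (∫ U, Matrix.det (1 - (U : Matrix (Fin N) (Fin N) ℂ)) *
        (starRingEnd ℂ) (detOneSubWedgeThree N U) ∂μ) = ((N / 3 : ℕ) : ℂ) + 1 ∧
    ∀ g : ℕ, N = 3 * g →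
      (∫ U, Matrix.det (1 - (U : Matrix (Fin N) (Fin N) ℂ)) *
          (starRingEnd ℂ) (detOneSubWedgeThree N U) ∂μ) = (g : ℂ) + 1 := by
  have : μ.IsMulLeftInvariant := ⟨fun V => (hinv V).map_eq⟩
  have hgeneral : ∫ U, det (1 - U.1) * starRingEnd ℂ (detOneSubWedgeThree N U) ∂μ =
      ((N / 3 : ℕ) : ℂ) + 1 := by
    have := integral_det_one_sub_mul_conj_det_wedge_three_general μ (m := 3) (by decide)
    rwa [Fintype.card_fin] at this
  refine ⟨hgeneral, ?_⟩
  rintro g rfl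
  simpa using hgeneral
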